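/- Let a > 0, ε > 0, and let X : [0,∞) → ℝ² be continuous, twice continuously differentiable on (0,∞), with X(0) = (2a, a) and Ẋ(t) → 0 as t → 0⁺, satisfying Ẍ(t) + (3/t)·Ẋ(t) + ∇f_{ε,a}(X(t)) = 0 for all t > 0. Suppose X(t) → 0 as t → ∞ and that there exist T_rad > 0 and κ > 0 with t³·det(X(t), Ẋ(t)) = κ for all t ≥ T_rad. Then there exist constants c₀ > 0, C₀ > 0, and T₀ > 0 such that c₀/(t²·log t) ≤ f_{ε,a}(X(t)) ≤ C₀/t² for all t ≥ T₀. -/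

import Mathlib

/-- `F(0) = 0`, `F(r) = ∫₀^r du/(−log u)` for `0 < r ≤ e⁻²`,
`F(r) = F(e⁻²) + (1/2)(r − e⁻²)` for `r ≥ e⁻²`. -/
noncomputable def F (r : ℝ) : ℝ :=
  if r ≤ Real.exp (-2) then ∫ u in (0:ℝ)..r, 1 / (-Real.log u)
  else (∫ u in (0:ℝ)..Real.exp (-2), 1 / (-Real.log u)) + (1/2) * (r - Real.exp (-2))

/-- `f_{ε,a}(x₁,x₂) = F(√(x₁²+x₂²)) + (ε/2)·((x₁ − a)₊)²`. -/
noncomputable def feps (ε a : ℝ) (x : EuclideanSpace ℝ (Fin 2)) : ℝ :=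
  F (Real.sqrt ((x 0)^2 + (x 1)^2)) + (ε/2) * (max (x 0 - a) 0)^2

/-- The integrand `1/(-log u)` is monotone on `[0, r]` for `r < 1` (with value `0` at `0`). -/
lemma aux_mono {r : ℝ} (hr : r < 1) :
    MonotoneOn (fun u : ℝ => 1 / (-Real.log u)) (Set.Icc 0 r) := by
  intro u hu v hv huv
  have hlogv : 0 ≤ -Real.log v := by
    have := Real.log_nonpos hv.1 (by linarith [hv.2]); linarith
  rcases eq_or_lt_of_le hu.1 with h | h
  · simp only [← h, Real.log_zero, neg_zero, div_zero]
    positivity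
  · have hv0 : 0 < v := lt_of_lt_of_le h huv
    have h1 : Real.log v < 0 := Real.log_neg hv0 (by linarith [hv.2])
    have h2 : Real.log u ≤ Real.log v := Real.log_le_log h huv
    exact one_div_le_one_div_of_le (by linarith) (by linarith)

lemma aux_int {r s : ℝ} (hs : 0 ≤ s) (hsr : s ≤ r) (hr : r < 1) :
    IntervalIntegrable (fun u : ℝ => 1 / (-Real.log u)) MeasureTheory.volume s r := by
  apply MonotoneOn.intervalIntegrable
  rw [Set.uIcc_of_le hsr]
  exact (aux_mono hr).mono (Set.Icc_subset_Icc_left hs)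

lemma aux_e : Real.exp (-2) < 1 := by
  rw [Real.exp_lt_one_iff]; norm_num

lemma F_eq {r : ℝ} (hr : r ≤ Real.exp (-2)) :
    F r = ∫ u in (0:ℝ)..r, 1 / (-Real.log u) := by
  simp [F, hr]

lemma F_upper {r : ℝ} (h0 : 0 < r) (hr : r ≤ Real.exp (-2)) :
    F r ≤ r * (1 / (-Real.log r)) := by
  have h1 : r < 1 := lt_of_le_of_lt hr aux_e
  rw [F_eq hr]
  have := intervalIntegral.integral_mono_on h0.le (aux_int le_rfl h0.le h1)
    (intervalIntegrable_const (c := 1 / (-Real.log r)))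
    (fun u hu => aux_mono h1 hu ⟨h0.le, le_rfl⟩ hu.2)
  simpa using this

lemma F_lower {r : ℝ} (h0 : 0 < r) (hr : r ≤ Real.exp (-2)) :
    r / 2 * (1 / (-Real.log (r / 2))) ≤ F r := by
  have h1 : r < 1 := lt_of_le_of_lt hr aux_e
  rw [F_eq hr]
  have hA := aux_int (r := r / 2) (s := 0) le_rfl (by linarith) (by linarith)
  have hB := aux_int (r := r) (s := r / 2) (by linarith) (by linarith) (by linarith)
  rw [← intervalIntegral.integral_add_adjacent_intervals hA hB]
  have h2 : 0 ≤ ∫ u in (0:ℝ)..(r/2), 1 / (-Real.log u) := by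
    apply intervalIntegral.integral_nonneg (by linarith)
    intro u hu
    have := Real.log_nonpos hu.1 (by linarith [hu.2])
    have : 0 ≤ -Real.log u := by linarith
    positivity
  have h3 := intervalIntegral.integral_mono_on (by linarith : r / 2 ≤ r)
    (intervalIntegrable_const (c := 1 / (-Real.log (r / 2)))) hB
    (fun u hu => aux_mono h1 ⟨by linarith, by linarith⟩ ⟨by linarith [hu.1], hu.2⟩ hu.1)
  rw [intervalIntegral.integral_const, smul_eq_mul] at h3
  have : r - r / 2 = r / 2 := by ring
  rw [this] at h3
  linarith

lemma F_deriv {r : ℝ} (h0 : 0 < r) (hr : r < Real.exp (-2)) :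
    HasDerivAt F (1 / (-Real.log r)) r := by
  have h1 : r < 1 := lt_trans hr aux_e
  have hc : ContinuousAt (fun u : ℝ => 1 / (-Real.log u)) r := by
    have : Real.log r < 0 := Real.log_neg h0 h1
    apply ContinuousAt.div continuousAt_const
    · exact (Real.continuousAt_log h0.ne').neg
    · linarith
  have hm : Measurable (fun u : ℝ => 1 / (-Real.log u)) := by fun_prop
  have := intervalIntegral.integral_hasDerivAt_right (aux_int le_rfl h0.le h1)
    hm.stronglyMeasurable.stronglyMeasurableAtFilter hc
  apply this.congr_of_eventuallyEq
  filter_upwards [Iio_mem_nhds hr] with u hu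
  exact F_eq (le_of_lt hu)

lemma feps_eq {ε a : ℝ} {p : EuclideanSpace ℝ (Fin 2)} (hp : ‖p‖ < a) :
    feps ε a p = F ‖p‖ := by
  have h1 : Real.sqrt ((p 0)^2 + (p 1)^2) = ‖p‖ := by
    simp [EuclideanSpace.norm_eq, Fin.sum_univ_two]
  have h2 : p 0 ≤ ‖p‖ := by
    have := PiLp.norm_apply_le p 0
    exact le_trans (le_abs_self _) this
  rw [feps, h1, max_eq_right (by linarith)]
  simp

lemma feps_grad {ε a : ℝ} {p : EuclideanSpace ℝ (Fin 2)} (hp0 : p ≠ 0) (hp : ‖p‖ < a)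
    (hp' : ‖p‖ < Real.exp (-2)) :
    HasGradientAt (feps ε a) (gradient (feps ε a) p) p ∧
      feps ε a p ≤ inner ℝ (gradient (feps ε a) p) p := by
  have hn : 0 < ‖p‖ := norm_pos_iff.mpr hp0
  have hev : feps ε a =ᶠ[nhds p] fun q => F ‖q‖ := by
    have : ∀ᶠ q in nhds p, ‖q‖ < a := continuous_norm.continuousAt.eventually (Iio_mem_nhds hp)
    filter_upwards [this] with q hq
    exact feps_eq hq
  have hd : DifferentiableAt ℝ (feps ε a) p := by
    refine DifferentiableAt.congr_of_eventuallyEq ?_ hev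
    exact (F_deriv hn hp').differentiableAt.comp p
      ((contDiffAt_norm ℝ hp0 (n := 1)).differentiableAt (by norm_num))
  have hg := hd.hasGradientAt
  refine ⟨hg, ?_⟩
  have hline : HasDerivAt (fun s : ℝ => s • p) p 1 := by
    simpa using (hasDerivAt_id (1:ℝ)).smul_const p
  have hg' := hg.hasFDerivAt
  have e1 : HasDerivAt (fun s : ℝ => feps ε a (s • p))
      (inner ℝ (gradient (feps ε a) p) p) 1 := by
    have hg2 : HasFDerivAt (feps ε a) ((InnerProductSpace.toDual ℝ _) (gradient (feps ε a) p))
      ((1:ℝ) • p) := by simpa using hg'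
    have := hg2.comp_hasDerivAt (1:ℝ) hline
    exact this
  have e2 : HasDerivAt (fun s : ℝ => F (s * ‖p‖)) (1 / (-Real.log ‖p‖) * ‖p‖) 1 := by
    have hl : HasDerivAt (fun s : ℝ => s * ‖p‖) ‖p‖ 1 := by
      simpa using (hasDerivAt_id (1:ℝ)).mul_const ‖p‖
    have hF : HasDerivAt F (1 / (-Real.log ‖p‖)) (1 * ‖p‖) := by
      simpa using F_deriv hn hp'
    exact hF.comp (1:ℝ) hl
  have e3 : (fun s : ℝ => feps ε a (s • p)) =ᶠ[nhds 1] fun s => F (s * ‖p‖) := by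
    have hc : Filter.Tendsto (fun s : ℝ => s • p) (nhds 1) (nhds p) := by
      simpa using hline.continuousAt.tendsto
    filter_upwards [hc.eventually hev, Ioi_mem_nhds (zero_lt_one (α := ℝ))] with s hs hs0
    rw [hs, norm_smul, Real.norm_of_nonneg (le_of_lt hs0)]
  have := e1.unique (e2.congr_of_eventuallyEq e3)
  rw [this, feps_eq hp, mul_comm]
  exact F_upper hn hp'.le

/-- along the solution of the Nesterov flow for `f_{ε,a}` started at
`(2a, a)`, converging to `0` and carrying conserved angular momentum
`t³·det(X(t), Ẋ(t)) = κ > 0` for `t ≥ T_rad`, there are `c₀, C₀, T₀ > 0` with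
`c₀/(t²·log t) ≤ f_{ε,a}(X(t)) ≤ C₀/t²` for all `t ≥ T₀`. -/
theorem nesterov_function_value_matching_bounds (a ε : ℝ) (ha : 0 < a) (hε : 0 < ε)
    (X X' X'' : ℝ → EuclideanSpace ℝ (Fin 2))
    (hXcont : ContinuousOn X (Set.Ici 0))
    (hX' : ∀ t > (0:ℝ), HasDerivAt X (X' t) t)
    (hX'' : ∀ t > (0:ℝ), HasDerivAt X' (X'' t) t)
    (hX''cont : ContinuousOn X'' (Set.Ioi 0))
    (hX0₁ : X 0 0 = 2 * a) (hX0₂ : X 0 1 = a)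
    (hX'0 : Filter.Tendsto X' (nhdsWithin 0 (Set.Ioi 0)) (nhds 0))
    (hODE : ∀ t > (0:ℝ), X'' t + (3 / t) • X' t + gradient (feps ε a) (X t) = 0)
    (hlim : Filter.Tendsto X Filter.atTop (nhds 0))
    (Trad κ : ℝ) (hTrad : 0 < Trad) (hκ : 0 < κ)
    (hmom : ∀ t ≥ Trad, t ^ 3 * (X t 0 * X' t 1 - X t 1 * X' t 0) = κ) :
    ∃ c₀ > (0:ℝ), ∃ C₀ > (0:ℝ), ∃ T₀ > (0:ℝ), ∀ t ≥ T₀,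
      c₀ / (t ^ 2 * Real.log t) ≤ feps ε a (X t) ∧ feps ε a (X t) ≤ C₀ / t ^ 2 := by
  have hsmall : ∀ᶠ t in Filter.atTop, ‖X t‖ < min a (Real.exp (-2)) := by
    have h := hlim.norm
    rw [norm_zero] at h
    exact h.eventually (Iio_mem_nhds (lt_min ha (Real.exp_pos _)))
  obtain ⟨T1, hT1⟩ := Filter.eventually_atTop.mp hsmall
  set T := max T1 Trad with hT
  have hTpos : 0 < T := lt_of_lt_of_le hTrad (le_max_right _ _)
  have hXa : ∀ t ≥ T, ‖X t‖ < a := fun t ht =>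
    lt_of_lt_of_le (hT1 t (le_trans (le_max_left _ _) ht)) (min_le_left _ _)
  have hXe : ∀ t ≥ T, ‖X t‖ < Real.exp (-2) := fun t ht =>
    lt_of_lt_of_le (hT1 t (le_trans (le_max_left _ _) ht)) (min_le_right _ _)
  have hX0 : ∀ t ≥ T, X t ≠ 0 := by
    intro t ht h
    have := hmom t (le_trans (le_max_right _ _) ht)
    rw [h] at this
    simp at this
    linarith
  -- Lyapunov function
  set E : ℝ → ℝ := fun t => t ^ 2 * feps ε a (X t) + 2 * ‖X t + (t / 2) • X' t‖ ^ 2 with hE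
  have hEd : ∀ t ≥ T, ∃ d ≤ 0, HasDerivAt E d t := by
    intro t ht
    have htp : 0 < t := lt_of_lt_of_le hTpos ht
    obtain ⟨hg, hconv⟩ := feps_grad (ε := ε) (hX0 t ht) (hXa t ht) (hXe t ht)
    set G := gradient (feps ε a) (X t) with hG
    have hfX : HasDerivAt (fun t => feps ε a (X t)) (inner ℝ G (X' t)) t := by
      have := hg.hasFDerivAt.comp_hasDerivAt t (hX' t htp)
      exact this
    have hhalf : HasDerivAt (fun t : ℝ => t / 2) (1 / 2) t := (hasDerivAt_id t).div_const 2
    have hV : HasDerivAt (fun t => X t + (t / 2) • X' t)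
        (X' t + ((t / 2) • X'' t + (1 / 2 : ℝ) • X' t)) t :=
      (hX' t htp).add (hhalf.smul (hX'' t htp))
    have hVeq : X' t + ((t / 2) • X'' t + (1 / 2 : ℝ) • X' t) = (-(t / 2)) • G := by
      have h := hODE t htp
      have h2 : X'' t = -((3 / t) • X' t) - G := by
        rw [← sub_eq_zero]; rw [← h]; abel
      rw [h2, smul_sub, smul_neg, smul_smul]
      have : t / 2 * (3 / t) = 3 / 2 := by field_simp
      rw [this]
      module
    rw [hVeq] at hV
    have h2 : HasDerivAt (fun t : ℝ => t ^ 2) (2 * t) t := by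
      simpa using hasDerivAt_pow 2 t
    have hEt := (h2.mul hfX).add (hV.norm_sq.const_mul 2)
    refine ⟨_, ?_, hEt⟩
    simp only [inner_add_left, inner_smul_left, inner_smul_right, RCLike.conj_to_real]
    have c1 : inner ℝ (X t) G = inner ℝ G (X t) := real_inner_comm _ _
    have c2 : inner ℝ (X' t) G = inner ℝ G (X' t) := real_inner_comm _ _
    rw [c1, c2]
    nlinarith [mul_nonneg htp.le (sub_nonneg.mpr hconv)]
  have hanti : AntitoneOn E (Set.Ici T) := by
    apply antitoneOn_of_deriv_nonpos (convex_Ici T)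
    · intro t ht
      obtain ⟨d, -, hd⟩ := hEd t ht
      exact hd.continuousAt.continuousWithinAt
    · intro t ht
      rw [interior_Ici] at ht
      obtain ⟨d, -, hd⟩ := hEd t (le_of_lt ht)
      exact hd.differentiableAt.differentiableWithinAt
    · intro t ht
      rw [interior_Ici] at ht
      obtain ⟨d, hd0, hd⟩ := hEd t (le_of_lt ht)
      rw [hd.deriv]; exact hd0
  have hlow : ∀ t ≥ T, ‖X t‖ / 2 * (1 / (-Real.log (‖X t‖ / 2))) ≤ feps ε a (X t) := by
    intro t ht
    rw [feps_eq (hXa t ht)]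
    exact F_lower (norm_pos_iff.mpr (hX0 t ht)) (hXe t ht).le
  have hfpos : ∀ t ≥ T, 0 ≤ feps ε a (X t) := by
    intro t ht
    refine le_trans ?_ (hlow t ht)
    have h1 : Real.log (‖X t‖ / 2) ≤ 0 :=
      Real.log_nonpos (by positivity) (by linarith [hXe t ht, aux_e])
    have : 0 ≤ -Real.log (‖X t‖ / 2) := by linarith
    positivity
  set M := E T with hM
  have hEM : ∀ t ≥ T, E t ≤ M := fun t ht => hanti (Set.mem_Ici.mpr le_rfl) ht ht
  have hM0 : 0 ≤ M := by
    have := hfpos T le_rfl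
    rw [hM]
    simp only [hE]
    positivity
  set B := 2 * (M + 2) with hB
  have hBpos : 0 < B := by positivity
  have hvel : ∀ t ≥ T, t * ‖X' t‖ ≤ B := by
    intro t ht
    have htp : 0 < t := lt_of_lt_of_le hTpos ht
    have h1 := hEM t ht
    simp only [hE] at h1
    have h2 := mul_nonneg (sq_nonneg t) (hfpos t ht)
    have h3 : ‖X t + (t / 2) • X' t‖ ≤ M + 1 := by
      nlinarith [norm_nonneg (X t + (t / 2) • X' t)]
    have h4 : ‖(t / 2) • X' t‖ ≤ ‖X t + (t / 2) • X' t‖ + ‖X t‖ := by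
      have := norm_sub_le (X t + (t / 2) • X' t) (X t)
      simpa using this
    rw [norm_smul, Real.norm_of_nonneg (by positivity)] at h4
    have := hXe t ht
    have := aux_e
    rw [hB]
    linarith
  have hrad : ∀ t ≥ T, κ / B / t ^ 2 ≤ ‖X t‖ := by
    intro t ht
    have htp : 0 < t := lt_of_lt_of_le hTpos ht
    have hm := hmom t (le_trans (le_max_right _ _) ht)
    have hdet : X t 0 * X' t 1 - X t 1 * X' t 0 ≤ ‖X t‖ * ‖X' t‖ := by
      refine le_of_abs_le (abs_le_of_sq_le_sq ?_ (by positivity))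
      rw [mul_pow, EuclideanSpace.norm_sq_eq, EuclideanSpace.norm_sq_eq]
      simp only [Fin.sum_univ_two, Real.norm_eq_abs, sq_abs]
      nlinarith [sq_nonneg (X t 0 * X' t 0 + X t 1 * X' t 1)]
    have h5 : κ ≤ t ^ 2 * ‖X t‖ * B := by
      calc κ = t ^ 3 * (X t 0 * X' t 1 - X t 1 * X' t 0) := hm.symm
        _ ≤ t ^ 3 * (‖X t‖ * ‖X' t‖) := by gcongr
        _ = t ^ 2 * ‖X t‖ * (t * ‖X' t‖) := by ring
        _ ≤ t ^ 2 * ‖X t‖ * B := by gcongr; exact hvel t ht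
    rw [div_div, div_le_iff₀ (by positivity)]
    linarith
  set k := κ / B / 2 with hk
  have hkpos : 0 < k := by positivity
  refine ⟨k / 3, by positivity, M + 1, by positivity, max T (max 2 (1 / k)),
    lt_of_lt_of_le hTpos (le_max_left _ _), ?_⟩
  intro t ht
  have htT : t ≥ T := le_trans (le_max_left _ _) ht
  have ht2 : 2 ≤ t := le_trans (le_trans (le_max_left _ _) (le_max_right _ _)) ht
  have htk : 1 / k ≤ t := le_trans (le_trans (le_max_right _ _) (le_max_right _ _)) ht
  have htp : 0 < t := by linarith
  constructor
  · refine le_trans ?_ (hlow t htT)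
    have hq : k / t ^ 2 ≤ ‖X t‖ / 2 := by
      have := hrad t htT
      have e : k / t ^ 2 = (κ / B / t ^ 2) / 2 := by rw [hk]; ring
      rw [e]; linarith
    have hq0 : 0 < k / t ^ 2 := by positivity
    have hlog1 : Real.log (‖X t‖ / 2) < 0 :=
      Real.log_neg (by linarith) (by linarith [hXe t htT, aux_e])
    have hlogt : 0 < Real.log t := Real.log_pos (by linarith)
    have hlog2 : -Real.log (‖X t‖ / 2) ≤ 3 * Real.log t := by
      have h1 := Real.log_le_log hq0 hq
      rw [Real.log_div hkpos.ne' (by positivity), Real.log_pow] at h1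
      have h2 := Real.log_le_log (by positivity) htk
      rw [one_div, Real.log_inv] at h2
      push_cast at h1
      linarith
    calc k / 3 / (t ^ 2 * Real.log t) = k / t ^ 2 * (1 / (3 * Real.log t)) := by
          field_simp
      _ ≤ ‖X t‖ / 2 * (1 / (-Real.log (‖X t‖ / 2))) := by
          apply mul_le_mul hq _ (by positivity) (by positivity)
          exact one_div_le_one_div_of_le (by linarith) hlog2
  · rw [le_div_iff₀ (by positivity)]
    have h1 := hEM t htT
    simp only [hE] at h1
    nlinarith [sq_nonneg ‖X t + (t / 2) • X' t‖]
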